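/- arXiv:2308.06384 — 2 statements merged into one kernel-verified Lean document; each statement's English description precedes it below -/
import Mathlib

section
/- Let d ≥ 1, let H be a bounded self-adjoint operator on ℓ²(ℤ^d) with rapidly decaying matrix entries, and let f : ℝ → ℂ be a Schwartz function. Then f(H) also has rapidly decaying matrix entries: for every μ ≥ 0 there exists C ≥ 0 such that |(f(H))_{ij}| ≤ C(1+‖i−j‖)^{−μ} for all i, j ∈ ℤ^d. -/
open scoped InnerProductSpace
open ContinuousLinearMap

/-- The standard orthonormal basis of `ℓ²(ℤ^d)`. -/
noncomputable def stdBasis {d : ℕ} (i : Fin d → ℤ) : lp (fun _ : Fin d → ℤ => ℂ) 2 :=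
  lp.single 2 i 1

/-- Matrix entries `T_{ij} = ⟪e_i, T e_j⟫` of a bounded operator on `ℓ²(ℤ^d)`. -/
noncomputable def matrixEntry {d : ℕ}
    (T : lp (fun _ : Fin d → ℤ => ℂ) 2 →L[ℂ] lp (fun _ : Fin d → ℤ => ℂ) 2)
    (i j : Fin d → ℤ) : ℂ :=
  ⟪stdBasis i, T (stdBasis j)⟫_ℂ

/-- The Euclidean norm on `ℤ^d`. -/
noncomputable def euclNorm {d : ℕ} (v : Fin d → ℤ) : ℝ :=
  Real.sqrt (∑ k : Fin d, ((v k : ℝ)) ^ 2)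

/-- A bounded operator on `ℓ²(ℤ^d)` has rapidly decaying matrix entries if for every `μ ≥ 0`
there is `C ≥ 0` with `|T_{ij}| ≤ C (1 + ‖i - j‖)^{-μ}` for all `i, j`. -/
def RapidDecay {d : ℕ}
    (T : lp (fun _ : Fin d → ℤ => ℂ) 2 →L[ℂ] lp (fun _ : Fin d → ℤ => ℂ) 2) : Prop :=
  ∀ μ : ℝ, 0 ≤ μ → ∃ C : ℝ, 0 ≤ C ∧
    ∀ i j : Fin d → ℤ, ‖matrixEntry T i j‖ ≤ C * (1 + euclNorm (i - j)) ^ (-μ)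

/-!
By Fourier inversion, `f(H) = ∫ 𝓕 f(t) exp(2πitH) dt`, and `𝓕 f` is again a Schwartz function, so
it suffices that off the diagonal the matrix of `exp(itH)` decays at any polynomial rate, with a
constant growing at most polynomially in `t`.

If `D` is the commutator with the diagonal operator with entries `φ i`, then `D^m T` has matrix
entries `(φ i - φ j)^m T_{ij}`. Since `D` is a derivation, `D^m exp(itH)` satisfies a linear
differential equation whose inhomogeneity involves, by the Leibniz rule, only the `D^k H` and lower
iterates of `D` on `exp(itH)`. As `exp(itH)` is unitary, Duhamel's formula and induction on `m`
bound `‖D^m exp(itH)‖` by a multiple of `(1 + |t|)^m`, the constant depending only on the norms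
`‖D^k H‖`. Schur's test bounds these uniformly over all `1`-Lipschitz `φ`, and `φ` is taken to be
a distance to a site.

Only the values of `f` on the bounded spectrum of `H` matter, so a smooth function may be cut off
to a Schwartz function.
-/

section Derivation

open NormedSpace (exp)
open Finset.HasAntidiagonal (antidiagonal mem_antidiagonal)

lemma iterate_leibniz {A F : Type*} [NonUnitalNonAssocSemiring A] [FunLike F A A]
    [AddMonoidHomClass F A A] (D : F) (hD : ∀ a b, D (a * b) = D a * b + a * D b) (a b : A)
    (n : ℕ) :
    D^[n] (a * b) = ∑ p ∈ antidiagonal n, n.choose p.1 • (D^[p.1] a * D^[p.2] b) := by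
  induction n with
  | zero => simp
  | succ n ih =>
    rw [Finset.sum_antidiagonal_choose_succ_nsmul (fun i j => D^[i] a * D^[j] b) n,
      Function.iterate_succ_apply', ih, map_sum, ← Finset.sum_add_distrib]
    refine Finset.sum_congr rfl fun p hp => ?_
    rw [map_nsmul, hD, ← Function.iterate_succ_apply' D, ← Function.iterate_succ_apply' D,
      smul_add, add_comm, ← Nat.choose_symm_of_eq_add (mem_antidiagonal.1 hp).symm]

lemma iterate_succ_map_one_of_leibniz {A F : Type*} [NonAssocRing A] [FunLike F A A]
    [AddMonoidHomClass F A A] (D : F) (hD : ∀ a b, D (a * b) = D a * b + a * D b) (n : ℕ) :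
    D^[n + 1] 1 = 0 := by
  have h1 : D 1 = 0 := by simpa using hD 1 1
  rw [Function.iterate_succ_apply, h1, iterate_map_zero]

lemma norm_sum_nsmul_mul_le {κ A : Type*} [NonUnitalNormedRing A] (s : Finset κ) (w : κ → ℕ)
    {a u : κ → A} {α β : κ → ℝ} (ha : ∀ p ∈ s, ‖a p‖ ≤ α p) (hu : ∀ p ∈ s, ‖u p‖ ≤ β p) :
    ‖∑ p ∈ s, w p • (a p * u p)‖ ≤ ∑ p ∈ s, (w p : ℝ) * (α p * β p) := by
  refine norm_sum_le_of_le s fun p hp => norm_nsmul_le.trans ?_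
  have hα : 0 ≤ α p := (norm_nonneg _).trans (ha p hp)
  gcongr
  exact (norm_mul_le _ _).trans (mul_le_mul (ha p hp) (hu p hp) (norm_nonneg _) hα)

variable {A : Type*} [NormedRing A] [NormedAlgebra ℝ A] [CompleteSpace A]

lemma exp_smul_mul_exp_neg_smul (X : A) (t : ℝ) : exp (t • X) * exp (-t • X) = 1 := by
  let : NormedAlgebra ℚ A := NormedAlgebra.restrictScalars ℚ ℝ A
  rw [neg_smul, ← NormedSpace.exp_add_of_commute (Commute.refl (t • X)).neg_right,
    add_neg_cancel, NormedSpace.exp_zero]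

-- Variation of constants: `exp (-t • X) * V t` has derivative `exp (-t • X) * R t`.
lemma norm_le_mul_abs_of_hasDerivAt_mul_add {X : A} (hX : ∀ t : ℝ, ‖exp (t • X)‖ ≤ 1)
    {V R : ℝ → A} (hV₀ : V 0 = 0) (hV : ∀ t, HasDerivAt V (X * V t + R t) t) {T B : ℝ}
    (hR : ∀ t, |t| ≤ |T| → ‖R t‖ ≤ B) : ‖V T‖ ≤ B * |T| := by
  have hexp (t : ℝ) : HasDerivAt (fun t : ℝ => exp (-t • X)) (-(exp (-t • X) * X)) t := by
    have h : HasDerivAt (fun t : ℝ => exp (-t • X)) ((-1 : ℝ) • (exp (-t • X) * X)) t :=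
      (hasDerivAt_exp_smul_const X (-t)).scomp t (hasDerivAt_neg t)
    rwa [neg_one_smul] at h
  have hderiv (t : ℝ) : HasDerivAt (fun t => exp (-t • X) * V t) (exp (-t • X) * R t) t := by
    convert! (hexp t).mul (hV t) using 1
    noncomm_ring
  have hbound (t : ℝ) (ht : |t| ≤ |T|) : ‖exp (-t • X) * R t‖ ≤ B :=
    (norm_mul_le _ _).trans
      ((mul_le_of_le_one_left (norm_nonneg _) (hX _)).trans (hR t ht))
  have hmean : ‖exp (-T • X) * V T‖ ≤ B * |T| := by
    simpa [hV₀] using (convex_Icc (-|T|) |T|).norm_image_sub_le_of_norm_hasDerivWithin_le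
      (f := fun t => exp (-t • X) * V t) (x := 0) (y := T)
      (fun t _ => (hderiv t).hasDerivWithinAt) (fun t ht => hbound t (abs_le.2 ht))
      (abs_le.1 (by simp)) (abs_le.1 le_rfl)
  calc ‖V T‖ = ‖exp (T • X) * (exp (-T • X) * V T)‖ := by
        rw [← mul_assoc, exp_smul_mul_exp_neg_smul, one_mul]
    _ ≤ ‖exp (T • X)‖ * ‖exp (-T • X) * V T‖ := norm_mul_le _ _
    _ ≤ B * |T| := (mul_le_of_le_one_left (norm_nonneg _) (hX T)).trans hmean

lemma hasDerivAt_iterate_exp_smul (D : A →L[ℝ] A) (hD : ∀ a b, D (a * b) = D a * b + a * D b)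
    (X : A) (m : ℕ) (t : ℝ) :
    HasDerivAt (fun t : ℝ => D^[m + 1] (exp (t • X)))
      (X * D^[m + 1] (exp (t • X)) + ∑ p ∈ antidiagonal m,
        (m + 1).choose (p.1 + 1) • (D^[p.1 + 1] X * D^[p.2] (exp (t • X)))) t := by
  have h := (D ^ (m + 1)).hasFDerivAt.comp_hasDerivAt t (hasDerivAt_exp_smul_const' (𝕂 := ℝ) X t)
  simp only [FunLike.coe_pow_eq_iterate] at h
  convert! h using 1
  rw [iterate_leibniz D hD, Finset.Nat.sum_antidiagonal_succ]
  simp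

theorem exists_norm_iterate_exp_smul_le (c : ℕ → ℝ) (m : ℕ) :
    ∃ C : ℝ, ∀ (D : A →L[ℝ] A) (X : A), (∀ a b, D (a * b) = D a * b + a * D b) →
    (∀ t : ℝ, ‖exp (t • X)‖ ≤ 1) → (∀ k, ‖D^[k] X‖ ≤ c k) →
    ∀ t : ℝ, ‖D^[m] (exp (t • X))‖ ≤ C * (1 + |t|) ^ m := by
  induction m using Nat.strong_induction_on with
  | _ m ih =>
  rcases m with _ | m
  · exact ⟨1, fun D X _ hexp _ t => by simpa using hexp t⟩
  choose! C hC using ih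
  set K := ∑ p ∈ antidiagonal m, ((m + 1).choose (p.1 + 1) : ℝ) * (c (p.1 + 1) * C p.2)
  refine ⟨K, fun D X hD hexp hc T => ?_⟩
  have hC₀ (k : ℕ) (hk : k < m + 1) : 0 ≤ C k := by
    simpa using (norm_nonneg _).trans (hC k hk D X hD hexp hc 0)
  have hsum (t : ℝ) (ht : |t| ≤ |T|) : ‖∑ p ∈ antidiagonal m,
      (m + 1).choose (p.1 + 1) • (D^[p.1 + 1] X * D^[p.2] (exp (t • X)))‖ ≤
      K * (1 + |T|) ^ m := by
    refine (norm_sum_nsmul_mul_le _ _ (β := fun p => C p.2 * (1 + |T|) ^ m) (fun p _ => hc _)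
      fun p hp => ?_).trans_eq ?_
    · have hp₂ : p.2 ≤ m := (Nat.le_add_left _ _).trans_eq (mem_antidiagonal.1 hp)
      refine (hC p.2 (Nat.lt_succ_of_le hp₂) D X hD hexp hc t).trans ?_
      have := hC₀ p.2 (Nat.lt_succ_of_le hp₂)
      calc C p.2 * (1 + |t|) ^ p.2 ≤ C p.2 * (1 + |T|) ^ p.2 := by gcongr
        _ ≤ C p.2 * (1 + |T|) ^ m := by
          gcongr
          linarith [abs_nonneg T]
    · simp only [K, Finset.sum_mul, mul_assoc]
  have hK : 0 ≤ K * (1 + |T|) ^ m := (norm_nonneg _).trans (hsum 0 (by simp))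
  calc ‖D^[m + 1] (exp (T • X))‖ ≤ K * (1 + |T|) ^ m * |T| :=
        norm_le_mul_abs_of_hasDerivAt_mul_add hexp
          (by simpa using iterate_succ_map_one_of_leibniz D hD m)
          (hasDerivAt_iterate_exp_smul D hD X m) hsum
    _ ≤ K * (1 + |T|) ^ m * (1 + |T|) := by gcongr; linarith
    _ = K * (1 + |T|) ^ (m + 1) := by ring

end Derivation

section Commutator
variable (𝕜 : Type*) {A : Type*} [NontriviallyNormedField 𝕜] [NormedRing A] [NormedAlgebra 𝕜 A]

/-- The inner derivation `b ↦ a * b - b * a` of a normed algebra, as a bounded operator. -/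
noncomputable def commutatorCLM (a : A) : A →L[𝕜] A :=
  ContinuousLinearMap.mul 𝕜 A a - (ContinuousLinearMap.mul 𝕜 A).flip a

lemma commutatorCLM_apply (a b : A) : commutatorCLM 𝕜 a b = a * b - b * a := rfl

lemma commutatorCLM_mul (a b c : A) :
    commutatorCLM 𝕜 a (b * c) = commutatorCLM 𝕜 a b * c + b * commutatorCLM 𝕜 a c := by
  simp only [commutatorCLM_apply]
  noncomm_ring

end Commutator

section Diagonal
variable {ι 𝕜 E : Type*} [RCLike 𝕜] [NormedAddCommGroup E] [InnerProductSpace 𝕜 E]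
  (b : HilbertBasis ι 𝕜 E)

/-- The bounded operator acting on each vector `b i` of a Hilbert basis as multiplication by
`φ i`, where `K` bounds `‖φ i‖`. -/
noncomputable def diagonalOperator (φ : ι → 𝕜) {K : ℝ} (hK : 0 ≤ K) (hφ : ∀ i, ‖φ i‖ ≤ K) :
    E →L[𝕜] E :=
  b.repr.symm.toContinuousLinearEquiv.toContinuousLinearMap ∘L
    lp.mapCLM 2 (fun i => φ i • ContinuousLinearMap.id 𝕜 𝕜) hK
      (fun i => by simpa [norm_smul] using hφ i) ∘L
    b.repr.toContinuousLinearEquiv.toContinuousLinearMap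

variable (φ : ι → 𝕜) {K : ℝ} (hK : 0 ≤ K) (hφ : ∀ i, ‖φ i‖ ≤ K)

lemma inner_diagonalOperator (i : ι) (v : E) :
    ⟪b i, diagonalOperator b φ hK hφ v⟫_𝕜 = φ i * ⟪b i, v⟫_𝕜 := by
  rw [← b.repr_apply_apply, ← b.repr_apply_apply]
  simp [diagonalOperator]

lemma diagonalOperator_apply_basis (j : ι) : diagonalOperator b φ hK hφ (b j) = φ j • b j := by
  classical
  refine b.repr.injective (lp.ext (funext fun i => ?_))
  rw [b.repr_apply_apply, inner_diagonalOperator, map_smul, lp.coeFn_smul, Pi.smul_apply,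
    b.repr_apply_apply, smul_eq_mul]
  rcases eq_or_ne i j with rfl | hij
  · rfl
  · simp [b.orthonormal.inner_eq_zero hij]

lemma inner_iterate_commutatorCLM {R : Type*} [NontriviallyNormedField R]
    [NormedAlgebra R (E →L[𝕜] E)] (T : E →L[𝕜] E) (i j : ι) (k : ℕ) :
    ⟪b i, (commutatorCLM R (diagonalOperator b φ hK hφ))^[k] T (b j)⟫_𝕜 =
      (φ i - φ j) ^ k * ⟪b i, T (b j)⟫_𝕜 := by
  induction k with
  | zero => simp
  | succ k ih =>
    rw [Function.iterate_succ_apply', commutatorCLM_apply, sub_apply, inner_sub_right,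
      mul_apply_eq_comp, mul_apply_eq_comp, inner_diagonalOperator, diagonalOperator_apply_basis,
      map_smul, inner_smul_right, ih]
    ring

end Diagonal

section MatrixEntries

variable {𝕜 E F : Type*} [RCLike 𝕜] [NormedAddCommGroup E] [InnerProductSpace 𝕜 E]
  [NormedAddCommGroup F] [InnerProductSpace 𝕜 F]

lemma norm_inner_apply_le_opNorm (T : E →L[𝕜] F) {u : F} {v : E} (hu : ‖u‖ = 1) (hv : ‖v‖ = 1) :
    ‖⟪u, T v⟫_𝕜‖ ≤ ‖T‖ :=
  calc ‖⟪u, T v⟫_𝕜‖ ≤ ‖u‖ * ‖T v‖ := norm_inner_le_norm u (T v)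
    _ ≤ ‖T‖ := by simpa [hu] using T.unit_le_opNorm v hv.le

lemma sum_sq_sum_mul_le {ι κ : Type*} (s : Finset ι) (t : Finset κ) {k : ι → κ → ℝ} {u : κ → ℝ}
    {R S : ℝ} (hk : ∀ i j, 0 ≤ k i j) (hR : ∀ i, ∑ j ∈ t, k i j ≤ R)
    (hS : ∀ j, ∑ i ∈ s, k i j ≤ S) (hR₀ : 0 ≤ R) :
    ∑ i ∈ s, (∑ j ∈ t, k i j * u j) ^ 2 ≤ R * S * ∑ j ∈ t, u j ^ 2 := by
  calc ∑ i ∈ s, (∑ j ∈ t, k i j * u j) ^ 2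
      ≤ ∑ i ∈ s, (∑ j ∈ t, k i j) * ∑ j ∈ t, k i j * u j ^ 2 := by
        gcongr with i
        exact Finset.sum_sq_le_sum_mul_sum_of_sq_le_mul t (fun j _ => hk i j)
          (fun j _ => mul_nonneg (hk i j) (sq_nonneg _)) fun j _ => by rw [mul_pow, sq, mul_assoc]
    _ ≤ ∑ i ∈ s, R * ∑ j ∈ t, k i j * u j ^ 2 := by
        gcongr with i
        · exact Finset.sum_nonneg fun j _ => mul_nonneg (hk i j) (sq_nonneg _)
        · exact hR i
    _ = R * ∑ j ∈ t, (∑ i ∈ s, k i j) * u j ^ 2 := by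
        rw [← Finset.mul_sum, Finset.sum_comm]
        simp only [Finset.sum_mul]
    _ ≤ R * ∑ j ∈ t, S * u j ^ 2 := by
        gcongr with j
        exact hS j
    _ = R * S * ∑ j ∈ t, u j ^ 2 := by rw [← Finset.mul_sum, mul_assoc]

variable {ι κ : Type*}

lemma norm_le_of_forall_sum_inner_sq_le (b : HilbertBasis ι 𝕜 E) {v : E} {C : ℝ} (hC : 0 ≤ C)
    (h : ∀ s : Finset ι, ∑ i ∈ s, ‖⟪b i, v⟫_𝕜‖ ^ 2 ≤ C ^ 2) : ‖v‖ ≤ C := by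
  rw [← b.repr.norm_map]
  refine lp.norm_le_of_forall_sum_le (by norm_num) hC fun s => ?_
  simpa [b.repr_apply_apply] using h s

theorem opNorm_le_sqrt_of_sum_norm_inner_le (b : HilbertBasis κ 𝕜 E) (b' : HilbertBasis ι 𝕜 F)
    (T : E →L[𝕜] F) {R S : ℝ} (hR₀ : 0 ≤ R) (hS₀ : 0 ≤ S)
    (hR : ∀ i (t : Finset κ), ∑ j ∈ t, ‖⟪b' i, T (b j)⟫_𝕜‖ ≤ R)
    (hS : ∀ j (s : Finset ι), ∑ i ∈ s, ‖⟪b' i, T (b j)⟫_𝕜‖ ≤ S) : ‖T‖ ≤ √(R * S) := by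
  refine T.opNorm_le_bound (Real.sqrt_nonneg _) fun v => ?_
  refine norm_le_of_forall_sum_inner_sq_le b' (by positivity) fun s => ?_
  have hpartial (t : Finset κ) :
      ∑ i ∈ s, ‖⟪b' i, T (∑ j ∈ t, b.repr v j • b j)⟫_𝕜‖ ^ 2 ≤ (√(R * S) * ‖v‖) ^ 2 := by
    calc ∑ i ∈ s, ‖⟪b' i, T (∑ j ∈ t, b.repr v j • b j)⟫_𝕜‖ ^ 2
        ≤ ∑ i ∈ s, (∑ j ∈ t, ‖⟪b' i, T (b j)⟫_𝕜‖ * ‖b.repr v j‖) ^ 2 := by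
          gcongr with i
          rw [map_sum, inner_sum]
          refine norm_sum_le_of_le _ fun j _ => ?_
          rw [map_smul, inner_smul_right, norm_mul, mul_comm]
      _ ≤ R * S * ∑ j ∈ t, ‖⟪b j, v⟫_𝕜‖ ^ 2 := by
          simp only [← b.repr_apply_apply]
          exact sum_sq_sum_mul_le s t (fun _ _ => norm_nonneg _) (fun i => hR i t)
            (fun j => hS j s) hR₀
      _ ≤ (√(R * S) * ‖v‖) ^ 2 := by
          rw [mul_pow, Real.sq_sqrt (by positivity)]
          gcongr
          exact b.orthonormal.sum_inner_products_le v
  have hcont : Continuous fun v : E => ∑ i ∈ s, ‖⟪b' i, T v⟫_𝕜‖ ^ 2 := by fun_prop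
  exact le_of_tendsto ((hcont.tendsto v).comp (b.hasSum_repr v)) (.of_forall hpartial)

end MatrixEntries

section RapidDecay

open NormedSpace (exp)
open MeasureTheory

/-- The counting functions of a family `x` of points of a metric space grow at most polynomially,
uniformly in the centre. This is encoded as a uniform bound on the sums of some inverse power of
`1 + dist`, the form in which Schur's test consumes it. -/
def PolynomialGrowth {ι X : Type*} [PseudoMetricSpace X] (x : ι → X) : Prop :=
  ∃ (s : ℕ) (K : ℝ), ∀ (i : ι) (t : Finset ι), ∑ j ∈ t, ((1 + dist (x i) (x j)) ^ s)⁻¹ ≤ K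

variable {ι X E : Type*} [PseudoMetricSpace X] [NormedAddCommGroup E] [InnerProductSpace ℂ E]
  {b : HilbertBasis ι ℂ E} {x : ι → X} {T : E →L[ℂ] E}

/-- The matrix of `T` in the Hilbert basis `b` decays faster than any inverse power of the distance
between the sites `x i`, `x j` at which the basis vectors `b i`, `b j` are located. -/
def RapidOffDiagonalDecay (b : HilbertBasis ι ℂ E) (x : ι → X) (T : E →L[ℂ] E) : Prop :=
  ∀ m : ℕ, ∃ C : ℝ, ∀ i j, dist (x i) (x j) ^ m * ‖⟪b i, T (b j)⟫_ℂ‖ ≤ C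

namespace RapidOffDiagonalDecay

lemma exists_one_add_dist_pow_mul_le (hT : RapidOffDiagonalDecay b x T) (m : ℕ) :
    ∃ C : ℝ, ∀ i j, (1 + dist (x i) (x j)) ^ m * ‖⟪b i, T (b j)⟫_ℂ‖ ≤ C := by
  obtain ⟨C₀, hC₀⟩ := hT 0
  obtain ⟨C, hC⟩ := hT m
  refine ⟨2 ^ (m - 1) * (C₀ + C), fun i j => ?_⟩
  calc (1 + dist (x i) (x j)) ^ m * ‖⟪b i, T (b j)⟫_ℂ‖
      ≤ 2 ^ (m - 1) * (1 ^ m + dist (x i) (x j) ^ m) * ‖⟪b i, T (b j)⟫_ℂ‖ := by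
        gcongr
        exact add_pow_le zero_le_one dist_nonneg m
    _ = 2 ^ (m - 1) * (dist (x i) (x j) ^ 0 * ‖⟪b i, T (b j)⟫_ℂ‖ +
          dist (x i) (x j) ^ m * ‖⟪b i, T (b j)⟫_ℂ‖) := by ring
    _ ≤ 2 ^ (m - 1) * (C₀ + C) := by
        gcongr
        exacts [hC₀ i j, hC i j]

lemma const_smul (hT : RapidOffDiagonalDecay b x T) (a : ℂ) :
    RapidOffDiagonalDecay b x (a • T) := fun m => by
  obtain ⟨C, hC⟩ := hT m
  refine ⟨‖a‖ * C, fun i j => ?_⟩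
  rw [smul_apply, inner_smul_right, norm_mul, mul_left_comm]
  gcongr
  exact hC i j

lemma exists_norm_iterate_commutatorCLM_le (hx : PolynomialGrowth x)
    (hT : RapidOffDiagonalDecay b x T) (k : ℕ) :
    ∃ c : ℝ, ∀ (φ : ι → ℂ) (K : ℝ) (hK : 0 ≤ K) (hφ : ∀ i, ‖φ i‖ ≤ K),
      (∀ i j, ‖φ i - φ j‖ ≤ dist (x i) (x j)) →
      ‖(commutatorCLM ℝ (diagonalOperator b φ hK hφ))^[k] T‖ ≤ c := by
  obtain ⟨s, G, hG⟩ := hx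
  obtain ⟨C, hC⟩ := hT.exists_one_add_dist_pow_mul_le (k + s)
  refine ⟨√(|C| * |G| * (|C| * |G|)), fun φ K hK hφ hlip => ?_⟩
  have hentry (i j : ι) :
      ‖⟪b i, (commutatorCLM ℝ (diagonalOperator b φ hK hφ))^[k] T (b j)⟫_ℂ‖ ≤
        |C| * ((1 + dist (x i) (x j)) ^ s)⁻¹ := by
    rw [inner_iterate_commutatorCLM, norm_mul, norm_pow, ← div_eq_mul_inv,
      le_div_iff₀ (by positivity)]
    calc ‖φ i - φ j‖ ^ k * ‖⟪b i, T (b j)⟫_ℂ‖ * (1 + dist (x i) (x j)) ^ s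
        ≤ (1 + dist (x i) (x j)) ^ k * ‖⟪b i, T (b j)⟫_ℂ‖ * (1 + dist (x i) (x j)) ^ s := by
          gcongr
          linarith [hlip i j]
      _ = (1 + dist (x i) (x j)) ^ (k + s) * ‖⟪b i, T (b j)⟫_ℂ‖ := by ring
      _ ≤ |C| := (hC i j).trans (le_abs_self C)
  have hsum (i : ι) (t : Finset ι) :
      ∑ j ∈ t, |C| * ((1 + dist (x i) (x j)) ^ s)⁻¹ ≤ |C| * |G| := by
    rw [← Finset.mul_sum]
    gcongr
    exact (hG i t).trans (le_abs_self G)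
  refine opNorm_le_sqrt_of_sum_norm_inner_le b b _ (by positivity) (by positivity)
    (fun i t => (Finset.sum_le_sum fun j _ => hentry i j).trans (hsum i t))
    fun j t => (Finset.sum_le_sum fun i _ => hentry i j).trans ?_
  simpa only [dist_comm] using hsum j t

theorem exists_dist_pow_mul_norm_inner_exp_smul_le [CompleteSpace E] (hx : PolynomialGrowth x)
    (hT : RapidOffDiagonalDecay b x T) (hexp : ∀ t : ℝ, ‖exp (t • T)‖ ≤ 1) (m : ℕ) :
    ∃ C : ℝ, ∀ (t : ℝ) (i j : ι),
      dist (x i) (x j) ^ m * ‖⟪b i, exp (t • T) (b j)⟫_ℂ‖ ≤ C * (1 + |t|) ^ m := by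
  choose c hc using hT.exists_norm_iterate_commutatorCLM_le hx
  obtain ⟨C, hC⟩ := exists_norm_iterate_exp_smul_le (A := E →L[ℂ] E) c m
  refine ⟨C, fun t i j => ?_⟩
  -- Truncating the distance to `x j` at `dist (x i) (x j)` makes the diagonal operator bounded
  -- while `φ i - φ j` is still the full distance.
  set φ : ι → ℂ := fun k => (min (dist (x k) (x j)) (dist (x i) (x j)) : ℝ) with φ_def
  have hφ (k : ι) : ‖φ k‖ ≤ dist (x i) (x j) := by
    rw [Complex.norm_of_nonneg (le_min dist_nonneg dist_nonneg)]
    exact min_le_right _ _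
  have hlip (k l : ι) : ‖φ k - φ l‖ ≤ dist (x k) (x l) := by
    rw [← Complex.ofReal_sub, Complex.norm_real, Real.norm_eq_abs]
    refine (abs_min_sub_min_le_max _ _ _ _).trans (max_le (abs_dist_sub_le _ _ _) ?_)
    simp
  have hij : φ i - φ j = dist (x i) (x j) := by simp [φ_def]
  have hnorm := hC (commutatorCLM ℝ (diagonalOperator b φ dist_nonneg hφ)) T
    (commutatorCLM_mul ℝ _) hexp (fun k => hc k φ _ dist_nonneg hφ hlip) t
  calc dist (x i) (x j) ^ m * ‖⟪b i, exp (t • T) (b j)⟫_ℂ‖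
      = ‖⟪b i, (commutatorCLM ℝ (diagonalOperator b φ dist_nonneg hφ))^[m]
          (exp (t • T)) (b j)⟫_ℂ‖ := by
        rw [inner_iterate_commutatorCLM, hij, norm_mul, norm_pow,
          Complex.norm_of_nonneg dist_nonneg]
    _ ≤ ‖(commutatorCLM ℝ (diagonalOperator b φ dist_nonneg hφ))^[m] (exp (t • T))‖ :=
        norm_inner_apply_le_opNorm _ (b.orthonormal.norm_eq_one i) (b.orthonormal.norm_eq_one j)
    _ ≤ C * (1 + |t|) ^ m := hnorm

theorem integral [CompleteSpace E] {Ω : Type*} [MeasurableSpace Ω] {ν : Measure Ω}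
    {U : Ω → E →L[ℂ] E} (hU : Integrable U ν)
    (h : ∀ m : ℕ, ∃ w : Ω → ℝ, Integrable w ν ∧
      ∀ ω i j, dist (x i) (x j) ^ m * ‖⟪b i, U ω (b j)⟫_ℂ‖ ≤ w ω) :
    RapidOffDiagonalDecay b x (∫ ω, U ω ∂ν) := fun m => by
  obtain ⟨w, hw, hle⟩ := h m
  refine ⟨∫ ω, w ω ∂ν, fun i j => ?_⟩
  have hentry : ⟪b i, (∫ ω, U ω ∂ν) (b j)⟫_ℂ = ∫ ω, ⟪b i, U ω (b j)⟫_ℂ ∂ν := by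
    rw [ContinuousLinearMap.integral_apply hU, integral_inner (hU.apply_continuousLinearMap _)]
  calc dist (x i) (x j) ^ m * ‖⟪b i, (∫ ω, U ω ∂ν) (b j)⟫_ℂ‖
      = ‖∫ ω, ((dist (x i) (x j) ^ m : ℝ) : ℂ) * ⟪b i, U ω (b j)⟫_ℂ ∂ν‖ := by
        rw [hentry, integral_const_mul, norm_mul,
          Complex.norm_of_nonneg (by positivity)]
    _ ≤ ∫ ω, w ω ∂ν := by
        refine norm_integral_le_of_norm_le hw (.of_forall fun ω => ?_)
        rw [norm_mul, Complex.norm_of_nonneg (by positivity)]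
        exact hle ω i j

end RapidOffDiagonalDecay

end RapidDecay

section FourierCalculus

open NormedSpace (exp)
open Complex (I)
open MeasureTheory FourierTransform
open scoped Real

lemma integrable_one_add_abs_pow_mul_norm_schwartzMap {F : Type*} [NormedAddCommGroup F]
    [NormedSpace ℝ F] (g : SchwartzMap ℝ F) (m : ℕ) :
    Integrable fun t : ℝ => (1 + |t|) ^ m * ‖g t‖ := by
  have h : Integrable fun t : ℝ => 2 ^ (m - 1) * (‖g t‖ + ‖t‖ ^ m * ‖g t‖) :=
    (g.integrable.norm.add (g.integrable_pow_mul volume m)).const_mul _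
  have hg := g.continuous
  refine h.mono' (Continuous.aestronglyMeasurable (by fun_prop)) (.of_forall fun t => ?_)
  rw [Real.norm_of_nonneg (by positivity), ← one_add_mul, ← mul_assoc, ← one_pow m]
  gcongr
  simpa using add_pow_le zero_le_one (abs_nonneg t) m

lemma schwartzMap_eq_integral_fourier_mul_cexp (f : SchwartzMap ℝ ℂ) (x : ℝ) :
    f x = ∫ t : ℝ, 𝓕 f t * Complex.exp (2 * π * I * t * x) := by
  have hinv : 𝓕⁻ (𝓕 f) = f := fourierInv_fourier_eq f
  conv_lhs => rw [← hinv, SchwartzMap.fourierInv_coe, Real.fourierInv_eq']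
  congr with t
  rw [smul_eq_mul, mul_comm]
  congr 2
  simp
  ring

variable {A : Type*} [CStarAlgebra A] {a : A}

lemma norm_cexp_two_pi_I_mul_of_mem_spectrum (ha : IsSelfAdjoint a) (t : ℝ) {z : ℂ}
    (hz : z ∈ spectrum ℂ a) : ‖Complex.exp (2 * π * I * t * z)‖ = 1 := by
  rw [ha.mem_spectrum_eq_re hz, Complex.norm_exp]
  simp

lemma exp_smul_two_pi_I_smul_eq_cfc (a : A) [IsStarNormal a] (t : ℝ) :
    exp (t • ((2 * π * I : ℂ) • a)) = cfc (fun z : ℂ => Complex.exp (2 * π * I * t * z)) a := by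
  have hta : t • ((2 * π * I : ℂ) • a) = (2 * π * I * t : ℂ) • a := by
    rw [← Complex.coe_smul, smul_smul, mul_comm]
  have hnormal : IsStarNormal ((2 * π * I * t : ℂ) • a) := inferInstance
  rw [hta, ← CFC.complex_exp_eq_normedSpace_exp hnormal]
  exact (cfc_comp_smul (2 * π * I * t : ℂ) Complex.exp a).symm

lemma norm_exp_smul_two_pi_I_smul_le_one (ha : IsSelfAdjoint a) (t : ℝ) :
    ‖exp (t • ((2 * π * I : ℂ) • a))‖ ≤ 1 := by
  have := ha.isStarNormal
  rw [exp_smul_two_pi_I_smul_eq_cfc a]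
  exact norm_cfc_le zero_le_one fun z hz => (norm_cexp_two_pi_I_mul_of_mem_spectrum ha t hz).le

lemma integrable_fourier_smul_exp (ha : IsSelfAdjoint a) (f : SchwartzMap ℝ ℂ) :
    Integrable fun t : ℝ => 𝓕 f t • exp (t • ((2 * π * I : ℂ) • a)) := by
  have hexp : Continuous fun t : ℝ => exp (t • ((2 * π * I : ℂ) • a)) :=
    continuous_iff_continuousAt.2 fun t => (hasDerivAt_exp_smul_const _ t).continuousAt
  exact (𝓕 f).integrable.smul_bdd 1 hexp.aestronglyMeasurable
    (.of_forall (norm_exp_smul_two_pi_I_smul_le_one ha))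

theorem cfc_schwartzMap_eq_integral_fourier_smul_exp (ha : IsSelfAdjoint a)
    (f : SchwartzMap ℝ ℂ) :
    cfc (fun z : ℂ => f z.re) a = ∫ t : ℝ, 𝓕 f t • exp (t • ((2 * π * I : ℂ) • a)) := by
  have := ha.isStarNormal
  have hcont : ContinuousOn
      (Function.uncurry fun (t : ℝ) z => 𝓕 f t * Complex.exp (2 * π * I * t * z))
      (Set.univ ×ˢ spectrum ℂ a) := by
    have := (𝓕 f).continuous
    unfold Function.uncurry
    fun_prop
  have hbound (t : ℝ) (z : ℂ) (hz : z ∈ spectrum ℂ a) :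
      ‖𝓕 f t * Complex.exp (2 * π * I * t * z)‖ ≤ ‖𝓕 f t‖ := by
    rw [norm_mul, norm_cexp_two_pi_I_mul_of_mem_spectrum ha t hz, mul_one]
  calc cfc (fun z : ℂ => f z.re) a
      = cfc (fun z => ∫ t : ℝ, 𝓕 f t * Complex.exp (2 * π * I * t * z)) a := by
        refine cfc_congr fun z hz => ?_
        rw [schwartzMap_eq_integral_fourier_mul_cexp, ← ha.mem_spectrum_eq_re hz]
    _ = ∫ t : ℝ, cfc (fun z => 𝓕 f t * Complex.exp (2 * π * I * t * z)) a :=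
        cfc_integral _ _ a hcont (.of_forall hbound) (𝓕 f).integrable.norm.2
    _ = ∫ t : ℝ, 𝓕 f t • exp (t • ((2 * π * I : ℂ) • a)) := by
        congr with t
        rw [exp_smul_two_pi_I_smul_eq_cfc, ← cfc_smul (𝓕 f t) _ a]
        rfl

end FourierCalculus

section FunctionalCalculus

open Complex (I)
open FourierTransform
open scoped ContDiff Real

variable {ι X E : Type*} [PseudoMetricSpace X] [NormedAddCommGroup E] [InnerProductSpace ℂ E]
  [CompleteSpace E] {b : HilbertBasis ι ℂ E} {x : ι → X} {H : E →L[ℂ] E}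

theorem RapidOffDiagonalDecay.cfc_schwartzMap (hx : PolynomialGrowth x) (hH : IsSelfAdjoint H)
    (hHdecay : RapidOffDiagonalDecay b x H) (f : SchwartzMap ℝ ℂ) :
    RapidOffDiagonalDecay b x (cfc (fun z : ℂ => f z.re) H) := by
  rw [cfc_schwartzMap_eq_integral_fourier_smul_exp hH]
  refine .integral (integrable_fourier_smul_exp hH f) fun m => ?_
  obtain ⟨C, hC⟩ := (hHdecay.const_smul (2 * π * I)).exists_dist_pow_mul_norm_inner_exp_smul_le hx
    (norm_exp_smul_two_pi_I_smul_le_one hH) m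
  refine ⟨fun t => C * ((1 + |t|) ^ m * ‖𝓕 f t‖),
    (integrable_one_add_abs_pow_mul_norm_schwartzMap (𝓕 f) m).const_mul C, fun t i j => ?_⟩
  rw [smul_apply, inner_smul_right, norm_mul, mul_left_comm]
  calc _ ≤ ‖𝓕 f t‖ * (C * (1 + |t|) ^ m) :=
        mul_le_mul_of_nonneg_left (hC t i j) (norm_nonneg _)
    _ = C * ((1 + |t|) ^ m * ‖𝓕 f t‖) := by ring

lemma exists_schwartzMap_eqOn_closedBall {F : Type*} [NormedAddCommGroup F] [NormedSpace ℝ F]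
    {f : ℝ → F} (hf : ContDiff ℝ ∞ f) (r : ℝ) :
    ∃ g : SchwartzMap ℝ F, Set.EqOn g f (Metric.closedBall 0 r) := by
  let χ : ContDiffBump (0 : ℝ) := ⟨|r| + 1, |r| + 2, by positivity, by linarith⟩
  have hsupp : HasCompactSupport fun y => χ y • f y := χ.hasCompactSupport.smul_right
  refine ⟨hsupp.toSchwartzMap (χ.contDiff.smul hf), fun y hy => ?_⟩
  have hχ : χ y = 1 := χ.one_of_mem_closedBall
    (Metric.closedBall_subset_closedBall (by change r ≤ |r| + 1; linarith [le_abs_self r]) hy)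
  simp [hχ]

theorem rapid_decay_functional_calculus_general (hx : PolynomialGrowth x) (hH : IsSelfAdjoint H)
    (hHdecay : RapidOffDiagonalDecay b x H) {f : ℝ → ℂ} (hf : ContDiff ℝ ∞ f) :
    RapidOffDiagonalDecay b x (cfc (fun z : ℂ => f z.re) H) := by
  obtain ⟨g, hg⟩ := exists_schwartzMap_eqOn_closedBall hf (‖H‖ * ‖(1 : E →L[ℂ] E)‖)
  have hspec : (spectrum ℂ H).EqOn (fun z : ℂ => f z.re) (fun z : ℂ => g z.re) := fun z hz => by
    refine (hg ?_).symm
    rw [mem_closedBall_zero_iff]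
    exact (Complex.abs_re_le_norm z).trans (spectrum.norm_le_norm_mul_of_mem hz)
  rw [cfc_congr hspec]
  exact hHdecay.cfc_schwartzMap hx hH g

end FunctionalCalculus

section Lattice

lemma PolynomialGrowth.comp_injective {ι κ X : Type*} [PseudoMetricSpace X] {x : ι → X}
    (hx : PolynomialGrowth x) {e : κ → ι} (he : Function.Injective e) :
    PolynomialGrowth (x ∘ e) := by
  obtain ⟨s, K, hK⟩ := hx
  exact ⟨s, K, fun i t => by simpa using hK (e i) (t.map ⟨e, he⟩)⟩

variable {E : Type*} [NormedAddCommGroup E] [NormedSpace ℝ E] [FiniteDimensional ℝ E]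
  (L : Submodule ℤ E) [DiscreteTopology L]

lemma summable_one_add_norm_pow_inv {n : ℕ} (hn : Module.finrank ℤ L < n) :
    Summable fun z : L => ((1 + ‖z‖) ^ n)⁻¹ := by
  refine .of_norm_bounded_eventually (ZLattice.summable_norm_pow_inv L n hn) ?_
  filter_upwards [(Set.finite_singleton (0 : L)).compl_mem_cofinite] with z hz
  have : 0 < ‖z‖ := norm_pos_iff.2 hz
  rw [Real.norm_of_nonneg (by positivity), inv_pow]
  gcongr
  linarith

theorem polynomialGrowth_coe_zlattice : PolynomialGrowth ((↑) : L → E) := by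
  set n := Module.finrank ℤ L + 1
  have hsum := summable_one_add_norm_pow_inv L (Nat.lt_succ_self _ : Module.finrank ℤ L < n)
  refine ⟨n, ∑' z : L, ((1 + ‖z‖) ^ n)⁻¹, fun z t => ?_⟩
  rw [← (Equiv.subLeft z).tsum_eq]
  simpa [dist_eq_norm] using ((Equiv.subLeft z).summable_iff.2 hsum).sum_le_tsum t
    fun _ _ => by simp only [Function.comp_apply]; positivity

theorem polynomialGrowth_sum_zsmul_basis {κ : Type*} [Fintype κ] (v : Module.Basis κ ℝ E) :
    PolynomialGrowth fun i : κ → ℤ => ∑ k, i k • v k := by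
  have hcoe (i : κ → ℤ) : ((v.restrictScalars ℤ).equivFun.symm i : E) = ∑ k, i k • v k := by
    simp [Module.Basis.equivFun_symm_apply]
  simpa only [Function.comp_def, hcoe] using
    (polynomialGrowth_coe_zlattice (Submodule.span ℤ (Set.range v))).comp_injective
      (v.restrictScalars ℤ).equivFun.symm.injective

end Lattice

section IntegerLattice

variable {d : ℕ}

/-- The integer vector `i` as a point of Euclidean space. -/
noncomputable def latticePoint (i : Fin d → ℤ) : EuclideanSpace ℝ (Fin d) :=
  WithLp.toLp 2 fun k => (i k : ℝ)

lemma dist_latticePoint (i j : Fin d → ℤ) :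
    dist (latticePoint i) (latticePoint j) = euclNorm (i - j) := by
  simp [latticePoint, EuclideanSpace.dist_eq, euclNorm, Real.dist_eq]

lemma polynomialGrowth_latticePoint : PolynomialGrowth (latticePoint (d := d)) := by
  convert! polynomialGrowth_sum_zsmul_basis (EuclideanSpace.basisFun (Fin d) ℝ).toBasis using 2
  ext k
  simp [latticePoint, Pi.single_apply]

/-- The Hilbert basis underlying `stdBasis`. -/
noncomputable def stdHilbertBasis (d : ℕ) :
    HilbertBasis (Fin d → ℤ) ℂ (lp (fun _ : Fin d → ℤ => ℂ) 2) :=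
  .ofRepr (.refl ℂ _)

lemma stdHilbertBasis_apply (i : Fin d → ℤ) : stdHilbertBasis d i = stdBasis i :=
  ((stdHilbertBasis d).repr_symm_single i).symm

lemma matrixEntry_eq_inner_stdHilbertBasis
    (T : lp (fun _ : Fin d → ℤ => ℂ) 2 →L[ℂ] lp (fun _ : Fin d → ℤ => ℂ) 2) (i j : Fin d → ℤ) :
    matrixEntry T i j = ⟪stdHilbertBasis d i, T (stdHilbertBasis d j)⟫_ℂ := by
  rw [stdHilbertBasis_apply, stdHilbertBasis_apply, matrixEntry]

lemma rapidDecay_iff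
    (T : lp (fun _ : Fin d → ℤ => ℂ) 2 →L[ℂ] lp (fun _ : Fin d → ℤ => ℂ) 2) :
    RapidDecay T ↔ RapidOffDiagonalDecay (stdHilbertBasis d) latticePoint T := by
  have hnorm (v : Fin d → ℤ) : 0 ≤ euclNorm v := Real.sqrt_nonneg _
  constructor
  · intro hT m
    obtain ⟨C, _, hC⟩ := hT m m.cast_nonneg
    refine ⟨C, fun i j => ?_⟩
    have := hnorm (i - j)
    simp only [dist_latticePoint, ← matrixEntry_eq_inner_stdHilbertBasis]
    calc euclNorm (i - j) ^ m * ‖matrixEntry T i j‖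
        ≤ (1 + euclNorm (i - j)) ^ m * (C * (1 + euclNorm (i - j)) ^ (-m : ℝ)) := by
          gcongr
          · linarith
          · exact hC i j
      _ = C := by
          rw [Real.rpow_neg (by positivity), Real.rpow_natCast]
          field_simp
  · intro hT μ _
    obtain ⟨C, hC⟩ := hT.exists_one_add_dist_pow_mul_le ⌈μ⌉₊
    have hC₀ : 0 ≤ C := (by positivity : (0 : ℝ) ≤ _).trans (hC 0 0)
    refine ⟨C, hC₀, fun i j => ?_⟩
    have := hnorm (i - j)
    specialize hC i j
    simp only [dist_latticePoint, ← matrixEntry_eq_inner_stdHilbertBasis] at hC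
    rw [Real.rpow_neg (by positivity), ← div_eq_mul_inv, le_div_iff₀' (by positivity)]
    refine le_trans ?_ hC
    gcongr
    rw [← Real.rpow_natCast]
    exact Real.rpow_le_rpow_of_exponent_le (by linarith) (Nat.le_ceil μ)

end IntegerLattice

/-- If `H` is a bounded self-adjoint operator on `ℓ²(ℤ^d)` (`d ≥ 1`) with
rapidly decaying matrix entries and `f : ℝ → ℂ` is a Schwartz function, then `f(H)` (formed
through the continuous functional calculus of the self-adjoint operator `H`, applied through
the real part of the spectral variable since the spectrum of `H` is real) also has rapidly
decaying matrix entries. -/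
theorem rapid_decay_functional_calculus
    {d : ℕ} (hd : 1 ≤ d)
    (H : lp (fun _ : Fin d → ℤ => ℂ) 2 →L[ℂ] lp (fun _ : Fin d → ℤ => ℂ) 2)
    (hH : IsSelfAdjoint H) (hHrd : RapidDecay H) (f : SchwartzMap ℝ ℂ) :
    RapidDecay (cfc (fun z : ℂ => f z.re) H) :=
  (rapidDecay_iff _).2 <| rapid_decay_functional_calculus_general polynomialGrowth_latticePoint hH
    ((rapidDecay_iff H).1 hHrd) (f.smooth ⊤)
end

section
/- Let d ≥ 1 and let a : ℤ^d → ℂ be a finitely supported function. Let T be a bounded operator on ℓ²(ℤ^d) whose matrix entries satisfy T_{ij} = a(i−j) for all i, j ∈ ℤ^d. Then the spectrum of T equals the range of the symbol of a: spec(T) = { ∑_{m ∈ ℤ^d} a(m)·e^{2πi k·m} : k ∈ ℝ^d }, where k·m denotes the Euclidean inner product. -/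
open scoped InnerProductSpace Real
open ContinuousLinearMap

/-!
The translations generate a commutative subalgebra of the bounded operators on `ℓᵖ(G)`, and by
Gelfand theory on its double commutant the spectrum of `∑ a g • translation g` consists of the
values `∑ a g χ(g)`, where `χ` runs over a nonempty set of characters of `G` not depending on `a`.
Conjugation by the multiplication operator of a character `η` replaces `a` by `η a` without
changing the spectrum, so twisting moves one character of this set to any other character of `G`,
and the spectrum is the whole range of the symbol. The characters of `ℤ^d` are
`m ↦ exp (2πi k·m)`.
-/

open Function Set
open scoped ENNReal lp FourierTransform

section DoubleCommutant

variable {R A : Type*} [CommRing R] [Ring A] [Algebra R A]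

lemma isUnit_of_isUnit_coe_centralizer {s : Set A} {x : Subalgebra.centralizer R s}
    (hx : IsUnit (x : A)) : IsUnit x := by
  obtain ⟨u, hu⟩ := hx
  have inv_mem : (↑u⁻¹ : A) ∈ Subalgebra.centralizer R s := fun g hg ↦
    Commute.units_inv_right (show Commute g u from hu ▸ x.2 g hg)
  exact ⟨⟨x, ⟨_, inv_mem⟩, Subtype.ext (by simp [← hu]), Subtype.ext (by simp [← hu])⟩, rfl⟩

lemma spectrum_coe_centralizer {s : Set A} (x : Subalgebra.centralizer R s) :
    spectrum R (x : A) = spectrum R x :=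
  (spectrum.subset_subalgebra x).antisymm fun _ hz h ↦ hz (isUnit_of_isUnit_coe_centralizer h)

variable (R) in
/-- The double commutant of a subset `s` of an algebra; for commuting `s` it is a commutative
subalgebra containing `s` in which spectra can be computed. -/
abbrev doubleCommutant (s : Set A) : Subalgebra R A :=
  Subalgebra.centralizer R s.centralizer

variable {B : Type*} [NormedRing B] [NormedAlgebra ℂ B] [CompleteSpace B]

theorem mem_spectrum_iff_exists_algHom_doubleCommutant {s : Set B}
    (hs : ∀ x ∈ s, ∀ y ∈ s, x * y = y * x) (x : doubleCommutant ℂ s) {z : ℂ} :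
    z ∈ spectrum ℂ (x : B) ↔ ∃ φ : doubleCommutant ℂ s →ₐ[ℂ] ℂ, φ x = z := by
  have : CompleteSpace (doubleCommutant ℂ s) :=
    (Set.isClosed_centralizer s.centralizer).completeSpace_coe
  let : NormedCommRing (doubleCommutant ℂ s) :=
    { (inferInstance : NormedRing (doubleCommutant ℂ s)) with
      mul_comm := fun x y ↦
        Subtype.ext (Set.centralizer_centralizer_comm_of_comm hs _ x.2 _ y.2) }
  rw [spectrum_coe_centralizer, WeakDual.CharacterSpace.mem_spectrum_iff_exists]
  exact WeakDual.CharacterSpace.equivAlgHom.exists_congr_left.trans Iff.rfl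

end DoubleCommutant

section Symbol

variable {G : Type*} [AddCommGroup G]

lemma exists_circle_addChar_of_norm_le_one (ψ : AddChar G ℂ) (hψ : ∀ g, ‖ψ g‖ ≤ 1) :
    ∃ χ : AddChar G Circle, ∀ g, (χ g : ℂ) = ψ g := by
  have norm_eq_one (g : G) : ‖ψ g‖ = 1 := by
    have norm_mul_norm_neg : ‖ψ g‖ * ‖ψ (-g)‖ = 1 := by
      rw [← norm_mul, ← ψ.map_add_eq_mul, add_neg_cancel, ψ.map_zero_eq_one, norm_one]
    nlinarith [hψ g, hψ (-g), norm_nonneg (ψ g)]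
  exact ⟨{
    toFun g := ⟨ψ g, mem_sphere_zero_iff_norm.2 (norm_eq_one g)⟩
    map_zero_eq_one' := Circle.ext ψ.map_zero_eq_one
    map_add_eq_mul' g h := Circle.ext (ψ.map_add_eq_mul g h) }, fun _ ↦ rfl⟩

/-- The symbol, or Fourier transform, of `a : G → ℂ`: the function `χ ↦ ∑ a g χ(g)` on the
characters of `G`. It has the junk value `0` unless `a` is summable. -/
noncomputable def symbol (a : G → ℂ) (χ : AddChar G Circle) : ℂ :=
  ∑' g, a g * χ g

lemma symbol_mul_addChar (a : G → ℂ) (η χ : AddChar G Circle) :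
    symbol (fun g ↦ a g * η g) χ = symbol a (η * χ) := by
  simp [symbol, mul_assoc]

lemma summable_mul_addChar {a : G → ℂ} (ha : Summable a) (χ : AddChar G Circle) :
    Summable fun g ↦ a g * χ g :=
  .of_norm_bounded ha.norm fun g ↦ by rw [norm_mul, Circle.norm_coe, mul_one]

variable {B : Type*} [NormedRing B] [NormedAlgebra ℂ B] [CompleteSpace B]

lemma summable_smul_of_norm_le_one {ι : Type*} {a : ι → ℂ} {S : ι → B} (ha : Summable a)
    (hS : ∀ i, ‖S i‖ ≤ 1) : Summable fun i ↦ a i • S i :=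
  .of_norm_bounded ha.norm fun i ↦
    (norm_smul_le _ _).trans (mul_le_of_le_one_right (norm_nonneg _) (hS i))

theorem exists_spectrum_tsum_smul_eq_image_symbol [NormOneClass B] (S : AddChar G B)
    (hS : ∀ g, ‖S g‖ ≤ 1) :
    ∃ K : Set (AddChar G Circle), K.Nonempty ∧
      ∀ a : G → ℂ, Summable a → spectrum ℂ (∑' g, a g • S g) = symbol a '' K := by
  have : Nontrivial B := NormOneClass.nontrivial
  let C := doubleCommutant ℂ (range S)
  have : CompleteSpace C := (Set.isClosed_centralizer _).completeSpace_coe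
  have : NormOneClass C := ⟨norm_one (α := B)⟩
  have mem_spectrum_iff (x : C) {z : ℂ} : z ∈ spectrum ℂ (x : B) ↔ ∃ φ : C →ₐ[ℂ] ℂ, φ x = z := by
    refine mem_spectrum_iff_exists_algHom_doubleCommutant ?_ x
    rintro _ ⟨g, rfl⟩ _ ⟨h, rfl⟩
    rw [← S.map_add_eq_mul, ← S.map_add_eq_mul, add_comm]
  let S' : AddChar G C :=
    { toFun g := ⟨S g, Set.subset_centralizer_centralizer ⟨g, rfl⟩⟩
      map_zero_eq_one' := Subtype.ext S.map_zero_eq_one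
      map_add_eq_mul' g h := Subtype.ext (S.map_add_eq_mul g h) }
  have exists_addChar (φ : C →ₐ[ℂ] ℂ) : ∃ χ : AddChar G Circle, ∀ g, (χ g : ℂ) = φ (S' g) :=
    exists_circle_addChar_of_norm_le_one ((φ : C →* ℂ).compAddChar S') fun g ↦
      (AlgHom.norm_apply_le_self φ (S' g)).trans (hS g)
  choose χ hχ using exists_addChar
  have apply_tsum (φ : C →ₐ[ℂ] ℂ) {a : G → ℂ} (ha : Summable a) :
      φ (∑' g, a g • S' g) = symbol a (χ φ) := by
    have := φ.toContinuousLinearMap.map_tsum (summable_smul_of_norm_le_one ha (S := S') hS)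
    simpa [symbol, hχ] using this
  have coe_tsum {a : G → ℂ} (ha : Summable a) :
      ((∑' g, a g • S' g : C) : B) = ∑' g, a g • S g :=
    C.toSubmodule.subtypeL.map_tsum (summable_smul_of_norm_le_one ha (S := S') hS)
  refine ⟨range χ, ?_, fun a ha ↦ ?_⟩
  · obtain ⟨φ, -⟩ := (mem_spectrum_iff 1).1 (spectrum.nonempty (1 : B)).some_mem
    exact ⟨χ φ, φ, rfl⟩
  · ext z
    simp [← coe_tsum ha, mem_spectrum_iff, apply_tsum _ ha]

end Symbol

section WeightedComposition

variable {ι κ E F : Type*} [NormedAddCommGroup E] [NormedAddCommGroup F] {p : ℝ≥0∞}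

lemma memℓp_of_norm_eq_comp {f : ι → E} {g : κ → F} (σ : κ ≃ ι) (h : ∀ k, ‖g k‖ = ‖f (σ k)‖)
    (hf : Memℓp f p) : Memℓp g p := by
  rcases p.trichotomy with rfl | rfl | hp
  · rw [memℓp_zero_iff] at hf ⊢
    refine (hf.preimage σ.injective.injOn).subset fun k hk ↦ ?_
    exact norm_ne_zero_iff.1 (h k ▸ norm_ne_zero_iff.2 hk)
  · rw [memℓp_infty_iff] at hf ⊢
    refine hf.mono ?_
    rintro _ ⟨k, rfl⟩
    exact ⟨σ k, (h k).symm⟩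
  · rw [memℓp_gen_iff hp] at hf ⊢
    simpa only [h] using! hf.comp_injective σ.injective

lemma lp_norm_eq_of_norm_eq_comp (hp : p ≠ 0) {f : ℓ^p(ι, E)} {g : ℓ^p(κ, F)} (σ : κ ≃ ι)
    (h : ∀ k, ‖g k‖ = ‖f (σ k)‖) : ‖g‖ = ‖f‖ := by
  rcases p.trichotomy with rfl | rfl | hp_pos
  · exact absurd rfl hp
  · simpa only [lp.norm_eq_ciSup, h] using σ.iSup_comp (g := fun i ↦ ‖f i‖)
  · simp only [lp.norm_eq_tsum_rpow hp_pos, h]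
    rw [σ.tsum_eq fun i ↦ ‖f i‖ ^ p.toReal]

variable [NormedSpace ℂ E] [Fact (1 ≤ p)]

/-- The isometry `f ↦ c • (f ∘ σ)` of `ℓᵖ` spaces given by a bijection `σ` and unimodular weights
`c`. Translations and multiplications by characters are special cases. -/
noncomputable def weightedComp (c : κ → Circle) (σ : κ ≃ ι) : ℓ^p(ι, E) →ₗᵢ[ℂ] ℓ^p(κ, E) where
  toFun f := ⟨fun k ↦ c k • f (σ k),
    memℓp_of_norm_eq_comp σ (fun _ ↦ Circle.norm_smul _ _) (lp.memℓp f)⟩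
  map_add' _ _ := Subtype.ext (funext fun _ ↦ smul_add _ _ _)
  map_smul' _ _ := Subtype.ext (funext fun _ ↦ smul_comm _ _ _)
  norm_map' _ := lp_norm_eq_of_norm_eq_comp (zero_lt_one.trans_le Fact.out).ne' σ
    fun _ ↦ Circle.norm_smul _ _

/-- Pointwise multiplication by unimodular functions, as a representation on `ℓᵖ(ι, E)`. -/
noncomputable def modulation : (ι → Circle) →* (ℓ^p(ι, E) →L[ℂ] ℓ^p(ι, E)) where
  toFun c := (weightedComp c (Equiv.refl ι)).toContinuousLinearMap
  map_one' := by ext f i; exact one_smul _ _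
  map_mul' c c' := by ext f i; exact mul_smul _ _ _

@[simp]
lemma modulation_apply (c : ι → Circle) (f : ℓ^p(ι, E)) (i : ι) : modulation c f i = c i • f i :=
  rfl

variable {G : Type*} [AddCommGroup G]

/-- The translation representation of `G` on `ℓᵖ(G, E)`. -/
noncomputable def translation : AddChar G (ℓ^p(G, E) →L[ℂ] ℓ^p(G, E)) where
  toFun g := (weightedComp 1 (Equiv.subRight g)).toContinuousLinearMap
  map_zero_eq_one' := by
    ext f i
    simp [weightedComp]
  map_add_eq_mul' g h := by
    ext f i
    simp [weightedComp, sub_sub]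

@[simp]
lemma translation_apply (g : G) (f : ℓ^p(G, E)) (i : G) : translation g f i = f (i - g) :=
  one_smul _ _

lemma norm_translation_le_one (g : G) :
    ‖(translation g : ℓ^p(G, E) →L[ℂ] ℓ^p(G, E))‖ ≤ 1 :=
  LinearIsometry.norm_toContinuousLinearMap_le _

lemma modulation_mul_translation (χ : AddChar G Circle) (g : G) :
    modulation χ * translation g =
      (χ g : ℂ) • (translation g * modulation χ : ℓ^p(G, E) →L[ℂ] ℓ^p(G, E)) := by
  ext f i
  have : χ i • f (i - g) = χ g • χ (i - g) • f (i - g) := by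
    rw [smul_smul, ← χ.map_add_eq_mul, add_sub_cancel]
  simpa [Circle.smul_def] using! this

end WeightedComposition

section Convolution

variable {G E : Type*} [AddCommGroup G] [NormedAddCommGroup E] [NormedSpace ℂ E]
  {p : ℝ≥0∞} [Fact (1 ≤ p)]

/-- The operator of convolution with `a : G → ℂ` on `ℓᵖ(G, E)`, as a superposition of translations.
It has the junk value `0` unless the series converges in operator norm. -/
noncomputable def convolutionOperator (a : G → ℂ) : ℓ^p(G, E) →L[ℂ] ℓ^p(G, E) :=
  ∑' g, a g • translation g

variable [CompleteSpace E]

lemma summable_smul_translation {a : G → ℂ} (ha : Summable a) :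
    Summable fun g ↦ a g • (translation g : ℓ^p(G, E) →L[ℂ] ℓ^p(G, E)) :=
  summable_smul_of_norm_le_one ha norm_translation_le_one

lemma modulation_mul_convolutionOperator (χ : AddChar G Circle) {a : G → ℂ} (ha : Summable a) :
    modulation χ * convolutionOperator a =
      (convolutionOperator (fun g ↦ a g * χ g) * modulation χ : ℓ^p(G, E) →L[ℂ] ℓ^p(G, E)) := by
  have summable_translation := summable_smul_translation (E := E) (p := p) ha
  have summable_twist := summable_smul_translation (E := E) (p := p) (summable_mul_addChar ha χ)
  rw [convolutionOperator, convolutionOperator, ← summable_translation.tsum_mul_left,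
    ← summable_twist.tsum_mul_right]
  simp only [mul_smul_comm, smul_mul_assoc, modulation_mul_translation, smul_smul]

lemma spectrum_convolutionOperator_mul_addChar (χ : AddChar G Circle) {a : G → ℂ}
    (ha : Summable a) :
    spectrum ℂ (convolutionOperator fun g ↦ a g * χ g : ℓ^p(G, E) →L[ℂ] ℓ^p(G, E)) =
      spectrum ℂ (convolutionOperator a : ℓ^p(G, E) →L[ℂ] ℓ^p(G, E)) := by
  let u : (ℓ^p(G, E) →L[ℂ] ℓ^p(G, E))ˣ := modulation.toHomUnits χ
  have conj_eq : u.val * convolutionOperator a * u⁻¹.val = convolutionOperator fun g ↦ a g * χ g :=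
    u.mul_inv_eq_iff_eq_mul.2 (modulation_mul_convolutionOperator χ ha)
  rw [← conj_eq, spectrum.units_conjugate]

theorem spectrum_convolutionOperator [Nontrivial E] {a : G → ℂ} (ha : Summable a) :
    spectrum ℂ (convolutionOperator a : ℓ^p(G, E) →L[ℂ] ℓ^p(G, E)) = range (symbol a) := by
  classical
  have : Nontrivial ℓ^p(G, E) :=
    (lp.isometry_single (p := p) (E := fun _ ↦ E) (0 : G)).injective.nontrivial
  obtain ⟨K, ⟨χ₀, hχ₀⟩, spectrum_eq⟩ :=
    exists_spectrum_tsum_smul_eq_image_symbol (B := ℓ^p(G, E) →L[ℂ] ℓ^p(G, E))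
      translation norm_translation_le_one
  refine Subset.antisymm ((spectrum_eq a ha).trans_subset (image_subset_range _ _)) ?_
  rintro _ ⟨χ, rfl⟩
  rw [← spectrum_convolutionOperator_mul_addChar (χ / χ₀) ha, convolutionOperator,
    spectrum_eq _ (summable_mul_addChar ha _)]
  exact ⟨χ₀, hχ₀, by rw [symbol_mul_addChar, div_mul_cancel]⟩

lemma convolutionOperator_apply {a : G → ℂ} (ha : Summable a) (f : ℓ^p(G, E)) (i : G) :
    convolutionOperator a f i = ∑' g, a g • f (i - g) := by
  let evalAt : (ℓ^p(G, E) →L[ℂ] ℓ^p(G, E)) →L[ℂ] E :=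
    (lp.evalCLM ℂ (fun _ ↦ E) p i).comp (ContinuousLinearMap.apply ℂ _ f)
  refine (evalAt.map_tsum (summable_smul_translation ha)).trans (tsum_congr fun g ↦ ?_)
  exact congrArg (a g • ·) (translation_apply g f i)

lemma convolutionOperator_single [DecidableEq G] {a : G → ℂ} (ha : Summable a) (i j : G) (x : E) :
    convolutionOperator a (lp.single p j x) i = a (i - j) • x := by
  rw [convolutionOperator_apply ha, tsum_eq_single (i - j)]
  · simp
  · intro g hg
    rw [lp.single_apply_ne, smul_zero]
    rintro rfl
    simp at hg

lemma eq_convolutionOperator [DecidableEq G] (hp : p ≠ ∞) {a : G → ℂ} (ha : Summable a)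
    {T : ℓ^p(G, E) →L[ℂ] ℓ^p(G, E)}
    (hT : ∀ i j x, T (lp.single p j x) i = a (i - j) • x) : T = convolutionOperator a := by
  refine lp.ext_continuousLinearMap hp fun j ↦ ?_
  ext x i
  exact (hT i j x).trans (convolutionOperator_single ha i j x).symm

theorem spectrum_of_convolution_operator_general [Nontrivial E] [DecidableEq G] (hp : p ≠ ∞)
    {a : G → ℂ} (ha : Summable a) {T : ℓ^p(G, E) →L[ℂ] ℓ^p(G, E)}
    (hT : ∀ i j x, T (lp.single p j x) i = a (i - j) • x) :
    spectrum ℂ T = range (symbol a) := by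
  rw [eq_convolutionOperator hp ha hT, spectrum_convolutionOperator ha]

end Convolution

section IntegerLattice

variable {ι : Type*}

lemma addChar_pi_int_ext [Finite ι] [DecidableEq ι] {M : Type*} [CommMonoid M]
    {χ ψ : AddChar (ι → ℤ) M} (h : ∀ l, χ (Pi.single l 1) = ψ (Pi.single l 1)) : χ = ψ := by
  apply AddChar.toAddMonoidHomEquiv.injective
  ext l
  exact h l

lemma fourierChar_surjective : Surjective 𝐞 := fun z ↦ by
  obtain ⟨t, rfl⟩ := Circle.exp_surjective z
  exact ⟨t / (2 * π), by rw [Real.fourierChar_apply', mul_div_cancel₀ _ Real.two_pi_pos.ne']⟩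

variable [Fintype ι]

/-- The character `m ↦ exp (2πi k·m)` of the lattice `ι → ℤ` with frequency `k`. -/
noncomputable def latticeChar (k : ι → ℝ) : AddChar (ι → ℤ) Circle where
  toFun m := 𝐞 (∑ l, k l * m l)
  map_zero_eq_one' := by simp
  map_add_eq_mul' m n := by simp [mul_add, Finset.sum_add_distrib, AddChar.map_add_eq_mul]

lemma latticeChar_single [DecidableEq ι] (k : ι → ℝ) (l : ι) :
    latticeChar k (Pi.single l 1) = 𝐞 (k l) := by
  simp [latticeChar, Pi.single_apply]

lemma latticeChar_surjective : Surjective (latticeChar (ι := ι)) := fun χ ↦ by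
  classical
  choose k hk using fun l ↦ fourierChar_surjective (χ (Pi.single l 1))
  exact ⟨k, addChar_pi_int_ext fun l ↦ (latticeChar_single k l).trans (hk l)⟩

lemma range_symbol_pi_int {a : (ι → ℤ) → ℂ} (ha : (support a).Finite) :
    range (symbol a) = range fun k : ι → ℝ ↦ ∑ᶠ m : ι → ℤ,
      a m * Complex.exp ((2 * π * ∑ l, k l * (m l : ℝ) : ℝ) * Complex.I) := by
  rw [← latticeChar_surjective.range_comp]
  congr! with k
  exact tsum_eq_finsum (ha.subset (support_mul_subset_left _ _))

end IntegerLattice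

lemma apply_single_eq_matrixEntry_smul {d : ℕ}
    (T : lp (fun _ : Fin d → ℤ => ℂ) 2 →L[ℂ] lp (fun _ : Fin d → ℤ => ℂ) 2) (i j : Fin d → ℤ)
    (x : ℂ) : T (lp.single 2 j x) i = matrixEntry T i j • x := by
  have single_eq_smul : lp.single 2 j x = x • stdBasis j := by
    rw [stdBasis, ← lp.single_smul, smul_eq_mul, mul_one]
  simp [single_eq_smul, matrixEntry, stdBasis, lp.inner_single_left, mul_comm]

/-- If `T` is a bounded operator on `ℓ²(ℤ^d)` (`d ≥ 1`) whose matrix entries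
are given by convolution with a finitely supported function `a : ℤ^d → ℂ`, i.e.
`T_{ij} = a(i - j)`, then the spectrum of `T` equals the range of the symbol of `a`:
`spec(T) = { ∑_m a(m) e^{2πi k·m} : k ∈ ℝ^d }`. -/
theorem spectrum_of_convolution_operator
    {d : ℕ} (hd : 1 ≤ d) (a : (Fin d → ℤ) → ℂ) (ha : (Function.support a).Finite)
    (T : lp (fun _ : Fin d → ℤ => ℂ) 2 →L[ℂ] lp (fun _ : Fin d → ℤ => ℂ) 2)
    (hT : ∀ i j : Fin d → ℤ, matrixEntry T i j = a (i - j)) :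
    spectrum ℂ T = Set.range (fun k : Fin d → ℝ =>
      ∑ᶠ m : Fin d → ℤ,
        a m * Complex.exp (((2 * π * ∑ l : Fin d, k l * (m l : ℝ)) : ℝ) * Complex.I)) :=
  (spectrum_of_convolution_operator_general (by simp) (summable_of_hasFiniteSupport ha)
    fun i j x ↦ by rw [apply_single_eq_matrixEntry_smul, hT]).trans (range_symbol_pi_int ha)
end
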